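/- For every prime power q and every integer d ≥ 2, the adjacency matrix A of the point-hyperplane incidence graph I_{q,d} satisfies the matrix identity A³ = ((q^d − 1)/(q − 1) − 1) · q^{d−2} · B + q^{d−1} · A, where B is the matrix indexed by 𝔽_q^d ⊔ ℍ_q^d whose (u,v)-entry equals 1 if exactly one of u, v is a point of 𝔽_q^d and the other is a hyperplane in ℍ_q^d, and 0 otherwise. -/

import Mathlib

open scoped Classical

noncomputable section

/-- A hyperplane in `𝔽_q^d` is a `(d-1)`-dimensional affine subspace. -/
def IsHyperplane (F : Type*) [Field F] (d : ℕ) (π : AffineSubspace F (Fin d → F)) : Prop :=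
  (π : Set (Fin d → F)).Nonempty ∧ Module.finrank F π.direction = d - 1

/-- The set of hyperplanes in `𝔽_q^d`. -/
def Hyp (F : Type*) [Field F] (d : ℕ) : Type _ :=
  {π : AffineSubspace F (Fin d → F) // IsHyperplane F d π}

instance (F : Type*) [Field F] [Fintype F] (d : ℕ) : Finite (Hyp F d) := by
  have h1 : Finite (AffineSubspace F (Fin d → F)) :=
    Finite.of_injective (fun π => (π : Set (Fin d → F))) SetLike.coe_injective
  exact Subtype.finite

/-- Vertices of the point–hyperplane incidence graph: points ⊕ hyperplanes. -/
def Vtx (F : Type*) [Field F] (d : ℕ) : Type _ := (Fin d → F) ⊕ Hyp F d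

instance (F : Type*) [Field F] [Fintype F] (d : ℕ) : Finite (Vtx F d) := by
  unfold Vtx; infer_instance

instance (F : Type*) [Field F] [Fintype F] (d : ℕ) : Fintype (Vtx F d) :=
  Fintype.ofFinite _

/-- The adjacency matrix of the point–hyperplane incidence graph `I_{q,d}`. -/
def adjA (F : Type*) [Field F] (d : ℕ) : Matrix (Vtx F d) (Vtx F d) ℝ :=
  fun u v =>
    match u, v with
    | Sum.inl p, Sum.inr π => if p ∈ π.1 then 1 else 0
    | Sum.inr π, Sum.inl p => if p ∈ π.1 then 1 else 0
    | _, _ => 0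

/-- The matrix whose `(u,v)`-entry is `1` iff exactly one of `u, v` is a point and the
other is a hyperplane. -/
def matB (F : Type*) [Field F] (d : ℕ) : Matrix (Vtx F d) (Vtx F d) ℝ :=
  fun u v =>
    match u, v with
    | Sum.inl _, Sum.inr _ => 1
    | Sum.inr _, Sum.inl _ => 1
    | _, _ => 0

/-!
Order the vertices as points followed by hyperplanes, so that `A` is the block matrix with
off-diagonal blocks `N` and `Nᵀ`, where `N` is the point-hyperplane incidence matrix; then `A³` has
off-diagonal blocks `N Nᵀ N` and its transpose. Points and hyperplanes form a 2-design: `[d]_q`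
hyperplanes pass through a point and `[d-1]_q` through two distinct points, where
`[n]_q = 1 + q + ⋯ + q^(n-1)`, and a hyperplane has `q^(d-1)` points. Hence
`N Nᵀ = q^(d-1) I + [d-1]_q J` and `J N = q^(d-1) J` for all-ones matrices `J`, which gives
`N Nᵀ N = q^(d-1) [d-1]_q J + q^(d-1) N`, and `q [d-1]_q = [d]_q - 1`.

The hyperplanes are counted by duality: those containing a given subspace `S` correspond to the
points of the projective space of the annihilator of `S`.
-/

theorem geom_sum_mul_pow_succ {K : Type*} [Field K] {q : K} (hq : q ≠ 1) (n : ℕ) :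
    (∑ i ∈ Finset.range (n + 1), q ^ i) * q ^ (n + 1) =
      ((q ^ (n + 2) - 1) / (q - 1) - 1) * q ^ n := by
  rw [← geom_sum_eq hq, geom_sum_succ (n := n + 1), add_sub_cancel_right, pow_succ']
  ring

section AffineSubspace

variable {k V P : Type*} [Ring k] [AddCommGroup V] [Module k V] [AddTorsor V P]
  {s : AffineSubspace k P}

theorem natCard_affineSubspace_eq_natCard_direction (hs : (s : Set P).Nonempty) :
    Nat.card s = Nat.card s.direction := by
  have : Nonempty s := hs.to_subtype
  exact Nat.card_congr (Equiv.vaddConst (Classical.arbitrary s)).symm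

theorem natCard_affineSubspace_ge (hs : (s : Set P).Nonempty) (p : Submodule k V → Prop) :
    Nat.card {π : AffineSubspace k P // s ≤ π ∧ p π.direction} =
      Nat.card {W : Submodule k V // s.direction ≤ W ∧ p W} := by
  obtain ⟨x, hx⟩ := hs
  refine Nat.card_congr
    { toFun := fun π => ⟨π.1.direction, AffineSubspace.direction_le π.2.1, π.2.2⟩
      invFun := fun W => ⟨AffineSubspace.mk' x W.1, fun y hy => ?_, ?_⟩
      left_inv := fun π => Subtype.ext (AffineSubspace.mk'_eq (π.2.1 hx))
      right_inv := fun W => Subtype.ext (AffineSubspace.direction_mk' x W.1) }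
  · exact AffineSubspace.mem_mk'.2 (W.2.1 (AffineSubspace.vsub_mem_direction hy hx))
  · rw [AffineSubspace.direction_mk']
    exact W.2.2

end AffineSubspace

section HyperplaneCount

variable {k V : Type*} [Field k] [AddCommGroup V] [Module k V]

theorem natCard_submodule_le_finrank_eq_one [Finite k] (S : Submodule k V) :
    Nat.card {L : Submodule k V // L ≤ S ∧ Module.finrank k L = 1} =
      ∑ i ∈ Finset.range (Module.finrank k S), Nat.card k ^ i := by
  rw [← Projectivization.card_of_finrank k S rfl]
  let linesIn : {L : Submodule k S // Module.finrank k L = 1} ≃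
      {L : {L : Submodule k V // L ≤ S} // Module.finrank k L.1 = 1} :=
    (Submodule.MapSubtype.orderIso S).toEquiv.subtypeEquiv fun L => by
      rw [← Submodule.finrank_map_subtype_eq S L]
      rfl
  exact Nat.card_congr ((Projectivization.equivSubmodule k S).trans (linesIn.trans
    (Equiv.subtypeSubtypeEquivSubtypeInter (· ≤ S) (Module.finrank k · = 1)))).symm

theorem natCard_hyperplane_ge [Finite k] [FiniteDimensional k V] (S : Submodule k V) :
    Nat.card {W : Submodule k V // S ≤ W ∧ Module.finrank k W + 1 = Module.finrank k V} =
      ∑ i ∈ Finset.range (Module.finrank k V - Module.finrank k S), Nat.card k ^ i := by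
  have hS : Module.finrank k V - Module.finrank k S = Module.finrank k S.dualAnnihilator := by
    rw [← Subspace.finrank_add_finrank_dualAnnihilator_eq S, Nat.add_sub_cancel_left]
  rw [hS, ← natCard_submodule_le_finrank_eq_one]
  refine Nat.card_congr
    ((Subspace.orderIsoFiniteDimensional.toEquiv.trans OrderDual.ofDual).subtypeEquiv fun W => ?_)
  have hW := Subspace.finrank_add_finrank_dualAnnihilator_eq W
  exact and_congr Subspace.dualAnnihilator_le_dualAnnihilator_iff.symm
    (by rw [← hW, Nat.add_left_cancel_iff, eq_comm]; rfl)

theorem natCard_affine_hyperplane_mem_mem {P : Type*} [AddTorsor V P] [DecidableEq P] [Finite k]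
    [FiniteDimensional k V] (x y : P) :
    Nat.card {π : AffineSubspace k P //
        (x ∈ π ∧ y ∈ π) ∧ Module.finrank k π.direction + 1 = Module.finrank k V} =
      ∑ i ∈ Finset.range (Module.finrank k V - if x = y then 0 else 1), Nat.card k ^ i := by
  have hdir : Module.finrank k line[k, x, y].direction = if x = y then 0 else 1 := by
    rw [direction_affineSpan, vectorSpan_pair]
    split_ifs with h
    · simp [h]
    · exact finrank_span_singleton (vsub_ne_zero.2 h)
  have hle (π : AffineSubspace k P) : x ∈ π ∧ y ∈ π ↔ line[k, x, y] ≤ π := by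
    rw [affineSpan_le, Set.pair_subset_iff]
    rfl
  simp only [hle]
  rw [natCard_affineSubspace_ge ((affineSpan_nonempty k).2 (Set.insert_nonempty x {y}))
    fun W => Module.finrank k W + 1 = Module.finrank k V, natCard_hyperplane_ge, hdir]

end HyperplaneCount

section BipartiteMatrix

open Matrix

variable {m n R : Type*} [CommSemiring R]

/-- The adjacency matrix of the weighted bipartite graph on `m ⊕ n` with biadjacency matrix `N`. -/
def bipartiteMatrix (N : Matrix m n R) : Matrix (m ⊕ n) (m ⊕ n) R :=
  fromBlocks 0 N Nᵀ 0

theorem bipartiteMatrix_add (M N : Matrix m n R) :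
    bipartiteMatrix (M + N) = bipartiteMatrix M + bipartiteMatrix N := by
  simp [bipartiteMatrix, fromBlocks_add]

theorem bipartiteMatrix_smul (c : R) (N : Matrix m n R) :
    bipartiteMatrix (c • N) = c • bipartiteMatrix N := by
  simp [bipartiteMatrix, fromBlocks_smul]

theorem bipartiteMatrix_mul_self_mul_self [Fintype m] [Fintype n] (N : Matrix m n R) :
    bipartiteMatrix N * bipartiteMatrix N * bipartiteMatrix N = bipartiteMatrix (N * Nᵀ * N) := by
  simp [bipartiteMatrix, fromBlocks_multiply, Matrix.mul_assoc]

end BipartiteMatrix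

section Incidence

open Matrix

variable (F : Type*) [Field F] (d : ℕ)

/-- The point-hyperplane incidence matrix of `F^d`: rows are indexed by points, columns by
hyperplanes. -/
def incidenceMatrix : Matrix (Fin d → F) (Hyp F d) ℝ :=
  of fun p π => if p ∈ π.1 then 1 else 0

/-- The partition of the vertices into points and hyperplanes, as an equivalence so that block
matrices can be transported to the type synonym `Vtx F d`. -/
def vtxEquiv : Vtx F d ≃ (Fin d → F) ⊕ Hyp F d :=
  Equiv.refl _

theorem adjA_eq_submatrix :
    adjA F d = (bipartiteMatrix (incidenceMatrix F d)).submatrix (vtxEquiv F d) (vtxEquiv F d) := by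
  ext (p | π) (p' | π') <;> rfl

theorem matB_eq_submatrix :
    matB F d = (bipartiteMatrix (vecMulVec 1 1)).submatrix (vtxEquiv F d) (vtxEquiv F d) := by
  ext (p | π) (p' | π') <;> first | rfl | exact (one_mul (1 : ℝ)).symm

variable {F d} [Fintype F]

theorem one_vecMul_incidenceMatrix :
    1 ᵥ* incidenceMatrix F d = ((Fintype.card F : ℝ) ^ (d - 1)) • 1 := by
  ext π
  have hcard : Fintype.card {p // p ∈ π.1} = Fintype.card F ^ (d - 1) := by
    rw [← Nat.card_eq_fintype_card, ← Nat.card_eq_fintype_card, ← π.2.2]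
    exact (natCard_affineSubspace_eq_natCard_direction π.2.1).trans Module.natCard_eq_pow_finrank
  simp [incidenceMatrix, vecMul, dotProduct, ← Fintype.card_subtype, hcard]

instance : Fintype (Hyp F d) :=
  Fintype.ofFinite _

theorem card_hyp_mem_mem (hd : d ≠ 0) (p p' : Fin d → F) :
    Fintype.card {π : Hyp F d // p ∈ π.1 ∧ p' ∈ π.1} =
      ∑ i ∈ Finset.range (d - if p = p' then 0 else 1), Fintype.card F ^ i := by
  have hcount := natCard_affine_hyperplane_mem_mem (k := F) p p'
  rw [Module.finrank_fin_fun, Nat.card_eq_fintype_card (α := F)] at hcount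
  rw [← hcount, ← Nat.card_eq_fintype_card]
  refine Nat.card_congr ((Equiv.subtypeSubtypeEquivSubtypeInter (IsHyperplane F d)
    fun π => p ∈ π ∧ p' ∈ π).trans (Equiv.subtypeEquivRight fun π => ?_))
  constructor
  · rintro ⟨⟨-, hfin⟩, hmem⟩
    exact ⟨hmem, by lia⟩
  · rintro ⟨hmem, hfin⟩
    exact ⟨⟨⟨p, hmem.1⟩, by lia⟩, hmem⟩

theorem incidenceMatrix_mul_transpose (hd : d ≠ 0) :
    incidenceMatrix F d * (incidenceMatrix F d)ᵀ =
      ((Fintype.card F : ℝ) ^ (d - 1)) • 1 +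
        (∑ i ∈ Finset.range (d - 1), (Fintype.card F : ℝ) ^ i) • vecMulVec 1 1 := by
  ext p p'
  have hentry : (incidenceMatrix F d * (incidenceMatrix F d)ᵀ) p p' =
      Fintype.card {π : Hyp F d // p ∈ π.1 ∧ p' ∈ π.1} := by
    simp [Matrix.mul_apply, incidenceMatrix, ← ite_and, Fintype.card_subtype, and_comm]
  rw [hentry, card_hyp_mem_mem hd]
  obtain ⟨n, rfl⟩ := Nat.exists_eq_succ_of_ne_zero hd
  by_cases h : p = p' <;> simp [h, Finset.sum_range_succ, add_comm]

theorem incidenceMatrix_mul_transpose_mul_self (hd : d ≠ 0) :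
    incidenceMatrix F d * (incidenceMatrix F d)ᵀ * incidenceMatrix F d =
      ((∑ i ∈ Finset.range (d - 1), (Fintype.card F : ℝ) ^ i) * (Fintype.card F : ℝ) ^ (d - 1)) •
          vecMulVec 1 1 + ((Fintype.card F : ℝ) ^ (d - 1)) • incidenceMatrix F d := by
  rw [incidenceMatrix_mul_transpose hd, Matrix.add_mul, smul_mul, smul_mul, Matrix.one_mul,
    vecMulVec_mul, one_vecMul_incidenceMatrix, vecMulVec_smul, smul_smul, add_comm]

end Incidence

/-- `A³ = ((q^d−1)/(q−1) − 1)·q^{d−2}·B + q^{d−1}·A`. -/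
theorem adjacency_cube_identity (q d : ℕ) (hq : IsPrimePow q) (hd : 2 ≤ d)
    (F : Type) [Field F] [Fintype F] (hF : Fintype.card F = q) :
    adjA F d * adjA F d * adjA F d =
      ((((q : ℝ) ^ d - 1) / ((q : ℝ) - 1) - 1) * (q : ℝ) ^ (d - 2)) • matB F d
        + (q : ℝ) ^ (d - 1) • adjA F d := by
  have hq1 : (q : ℝ) ≠ 1 := by exact_mod_cast hq.one_lt.ne'
  obtain ⟨n, rfl⟩ := Nat.exists_eq_add_of_le' hd
  have hcube := incidenceMatrix_mul_transpose_mul_self (F := F) (d := n + 2) (by lia)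
  rw [hF, show n + 2 - 1 = n + 1 from rfl, geom_sum_mul_pow_succ hq1] at hcube
  rw [adjA_eq_submatrix, matB_eq_submatrix, Matrix.submatrix_mul_equiv,
    Matrix.submatrix_mul_equiv, bipartiteMatrix_mul_self_mul_self, hcube, bipartiteMatrix_add,
    bipartiteMatrix_smul, bipartiteMatrix_smul]
  rfl

end
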